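/- Suppose p is a condition in the poset P and F : N^k → N is a function definable in N (with parameters). Then there exists a condition q ≤ p with n_q = n_p such that for every tuple (σ, σ₁, …, σ_k) of elements of 2^{n_q} with σ distinct from each of σ₁, …, σ_k, there is some i < ω with q ⊢ (x_σ)_i ≠ (F(x_{σ₁}, …, x_{σ_k}))_i, where (y)_i denotes the i-th binary digit of y. -/

import Mathlib

open FirstOrder FirstOrder.Language

/-- Function symbols of the language of arithmetic: `0`, `1`, `+`, `·`. -/
inductive arithFunc : ℕ → Type
  | zero : arithFunc 0
  | one : arithFunc 0
  | add : arithFunc 2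
  | mul : arithFunc 2
  deriving DecidableEq

/-- Relation symbols of the language of arithmetic: `<`. -/
inductive arithRel : ℕ → Type
  | lt : arithRel 2
  deriving DecidableEq

/-- The first-order language of arithmetic `{0, 1, +, ·, <}`. -/
def arith : FirstOrder.Language := ⟨arithFunc, arithRel⟩

namespace Arith

variable {M : Type*} [arith.Structure M]

/-- The interpretation of `0`. -/
def zeroM (M : Type*) [arith.Structure M] : M :=
  Structure.funMap (L := arith) arithFunc.zero ![]

/-- The interpretation of `1`. -/
def oneM (M : Type*) [arith.Structure M] : M :=
  Structure.funMap (L := arith) arithFunc.one ![]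

/-- The interpretation of `+`. -/
def addM (x y : M) : M := Structure.funMap (L := arith) arithFunc.add ![x, y]

/-- The interpretation of `·`. -/
def mulM (x y : M) : M := Structure.funMap (L := arith) arithFunc.mul ![x, y]

/-- The interpretation of `<`. -/
def ltM (x y : M) : Prop := Structure.RelMap (L := arith) arithRel.lt ![x, y]

/-- Non-strict order. -/
def leM (x y : M) : Prop := ltM x y ∨ x = y

/-- The numeral `n` in `M`: `0`, or `1 + 1 + ⋯ + 1`. -/
def numeral (M : Type*) [arith.Structure M] : ℕ → M
  | 0 => zeroM M
  | n + 1 => addM (numeral M n) (oneM M)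

/-- The standard `arith`-structure on `ℕ`. -/
instance : arith.Structure ℕ where
  funMap {n} f v :=
    match f with
    | .zero => 0
    | .one => 1
    | .add => v 0 + v 1
    | .mul => v 0 * v 1
  RelMap {n} r v :=
    match r with
    | .lt => v 0 < v 1

/-- `M` is a model of Peano arithmetic: it satisfies the finitely many basic axioms of
`PA` together with induction for all parametrically definable sets (which is equivalent
to the usual first-order induction scheme). -/
def IsPAModel (M : Type*) [arith.Structure M] : Prop :=
  (∀ x : M, addM x (zeroM M) = x) ∧
  (∀ x y : M, addM x (addM y (oneM M)) = addM (addM x y) (oneM M)) ∧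
  (∀ x : M, mulM x (zeroM M) = zeroM M) ∧
  (∀ x y : M, mulM x (addM y (oneM M)) = addM (mulM x y) x) ∧
  (∀ x : M, ¬ ltM x (zeroM M)) ∧
  (∀ x y : M, ltM x (addM y (oneM M)) ↔ (ltM x y ∨ x = y)) ∧
  (∀ x : M, addM x (oneM M) ≠ zeroM M) ∧
  (∀ x y : M, addM x (oneM M) = addM y (oneM M) → x = y) ∧
  (∀ s : Set M, Set.Definable₁ (Set.univ : Set M) arith s →
    zeroM M ∈ s → (∀ x ∈ s, addM x (oneM M) ∈ s) → ∀ x : M, x ∈ s)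

/-- An element of `M` is standard if it is a numeral. -/
def IsStd (x : M) : Prop := ∃ n : ℕ, x = numeral M n

/-- `M` is a non-standard model of `PA`: a model of `PA` not isomorphic to the standard
model `ℕ`. -/
def NonstandardModel (M : Type*) [arith.Structure M] : Prop :=
  IsPAModel M ∧ ¬ Nonempty (M ≃[arith] ℕ)

/-- `(x)_i = 1`: the `i`-th binary digit of `x` is `1`, for standard `i`.  This is expressed
by saying that `x = u·2^(i+1) + (2^i + v)` with `v < 2^i`, where `2^i`, `2^(i+1)` are
numerals. -/
def digitB (x : M) (i : ℕ) : Prop :=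
  ∃ u v : M, x = addM (mulM u (numeral M (2 ^ (i + 1)))) (addM (numeral M (2 ^ i)) v) ∧
    ltM v (numeral M (2 ^ i))

/-- The standard system of `M`: the collection of subsets of `ℕ` coded by some
non-standard element of `M` (via its standard binary digits). -/
def SSy (M : Type*) [arith.Structure M] : Set (Set ℕ) :=
  {X | ∃ a : M, ¬ IsStd a ∧ ∀ i : ℕ, i ∈ X ↔ digitB a i}

/-- A function `M → M` is definable (with parameters) if its graph is a definable set. -/
def DefinableFun₁ (f : M → M) : Prop :=
  Set.Definable (Set.univ : Set M) arith {v : Fin 2 → M | f (v 0) = v 1}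

/-- A `k`-ary function `M^k → M` is definable (with parameters) if its graph is a
definable set. -/
def DefinableFun {k : ℕ} (F : (Fin k → M) → M) : Prop :=
  Set.Definable (Set.univ : Set M) arith
    {v : Fin (k + 1) → M | F (fun i => v i.castSucc) = v (Fin.last k)}

/-- `c` is the internal cardinality of the set `D ⊆ M`: there is an `M`-definable
bijection between `{x : x < c}` and `D`. -/
def InternalCard (D : Set M) (c : M) : Prop :=
  ∃ f : M → M, DefinableFun₁ f ∧ Set.BijOn f {x : M | ltM x c} D

/-- `y = 2^x` in the model `M`, expressed via the existence of a definable function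
satisfying the recursion of the base-`2` exponential up to `x`. -/
def IsPow2 (x y : M) : Prop :=
  ∃ f : M → M, DefinableFun₁ f ∧ f (zeroM M) = oneM M ∧
    (∀ z : M, ltM z x → f (addM z (oneM M)) = addM (f z) (f z)) ∧ f x = y

end Arith

namespace Arith

variable {N : Type*} [arith.Structure N]

/-- Formulas with constants for all elements of `N`, in free variables `x_σ` indexed by
binary sequences `σ ∈ 2^n`. -/
abbrev CFormula (N : Type*) [arith.Structure N] (n : ℕ) : Type _ :=
  (arith[[N]]).Formula (Fin n → Bool)

/-- `d^k` for standard `k`. -/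
def powStd (d : N) : ℕ → N
  | 0 => oneM N
  | k + 1 => mulM (powStd d k) d

/-- The binary sequence of length `n` coded by `j < 2^n`. -/
def binOfFin {n : ℕ} (j : Fin (2 ^ n)) : Fin n → Bool := fun i => j.val.testBit i.val

/-- The code `∑_σ b_σ · d^(rank σ)` of a tuple `(b_σ : σ ∈ 2^n)` of elements below `d`,
in base `d`. -/
def tupleCode (d : N) {n : ℕ} (b : (Fin n → Bool) → N) : N :=
  (List.finRange (2 ^ n)).foldr
    (fun j acc => addM (mulM (b (binOfFin j)) (powStd d j.val)) acc) (zeroM N)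

/-- `b` realizes all formulas in `fmls`. -/
def RealizesAll {n : ℕ} (fmls : Set (CFormula N n)) (b : (Fin n → Bool) → N) : Prop :=
  ∀ φ ∈ fmls, φ.Realize b

/-- The set of codes of tuples realizing `fmls` in `N`; this represents the internal set
`p(N)` of realizations of a condition. -/
def realizationCodes (d : N) {n : ℕ} (fmls : Set (CFormula N n)) : Set N :=
  {e | ∃ b : (Fin n → Bool) → N, RealizesAll fmls b ∧ e = tupleCode d b}

/-- A condition: a finite type `p` of `N` in the variables `(x_σ : σ ∈ 2^{n_p})`
(with parameters from `N`, and no quantifiers over any `x_σ`), such that `p ⊢ x_σ < d`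
(where `d = 2^a`), and such that for some positive rational `r = u/v`, internally in `N`,
`|p(N)| > r · d^(2^{n_p})`. -/
structure Condition (N : Type*) [arith.Structure N] (d : N) : Type _ where
  n : ℕ
  fmls : Set (CFormula N n)
  finite : fmls.Finite
  realizable : ∃ b : (Fin n → Bool) → N, RealizesAll fmls b
  bounded : ∀ b : (Fin n → Bool) → N, RealizesAll fmls b → ∀ σ : Fin n → Bool, ltM (b σ) d
  large : ∃ (u v : ℕ) (c : N), 0 < u ∧ 0 < v ∧
    InternalCard (realizationCodes d fmls) c ∧
    ltM (mulM (numeral N u) (powStd d (2 ^ n))) (mulM (numeral N v) c)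

/-- The `m`-reduct of a formula in the variables `(x_σ : σ ∈ 2^n)`: substitute
`x_{σ↾m}` for `x_σ`. -/
def reduct {n m : ℕ} (h : m ≤ n) (φ : CFormula N n) : CFormula N m :=
  φ.relabel fun σ => fun i => σ (Fin.castLE h i)

/-- The order on conditions: `q ≤ p` iff `n_q ≥ n_p` and `q` contains every
`n_q`-ramification of every formula in `p` (i.e. every formula whose `n_p`-reduct lies
in `p`). -/
def CondLE {d : N} (q p : Condition N d) : Prop :=
  ∃ h : p.n ≤ q.n, ∀ ψ : CFormula N q.n, reduct h ψ ∈ p.fmls → ψ ∈ q.fmls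

/-- Formulas in the variables `(x_f : f ∈ 2^ω)` with constants from `N`. -/
abbrev CFormulaInf (N : Type*) [arith.Structure N] : Type _ :=
  (arith[[N]]).Formula (ℕ → Bool)

/-- The `m`-reduct of a formula in the variables `(x_f : f ∈ 2^ω)`: substitute
`x_{f↾m}` for `x_f`. -/
def reductInf {m : ℕ} (φ : CFormulaInf N) : CFormula N m :=
  φ.relabel fun f => fun i => f i.val

end Arith

/-!
Call a definable set of tuples large if, computed inside `N`, it contains more than a standard
positive fraction of the `d ^ 2 ^ n` tuples below `d`. Fix a large set `P`, a coordinate `σ` and a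
function `f` of the other coordinates. A tuple for which `x_σ` and `f(x)` have the same first `m`
digits has the residue of `x_σ` modulo `2 ^ m` determined by the other coordinates, so such tuples
make up a fraction of at most `2 ^ (-m)`. For large standard `m` a large part of `P` remains, on
which one of the digits below `m` differs; one of these finitely many digits differs on a large
subset of `P`. Repeating this for each of the finitely many tuples of indices and adding a formula
defining the resulting large set to `p` gives `q`.

Sizes in `N` are obtained by counting the elements of a definable set with a function defined by
primitive recursion, which in turn rests on Gödel's `β` function.
-/

namespace Arith

section Definability

variable {N : Type*} [arith.Structure N] {α β : Type*}

/-- A predicate on tuples of elements of `N` that is definable with parameters. This is a class so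
that definability is established by instance search over the shape of the predicate. -/
class DefPred (P : (α → N) → Prop) : Prop where
  definable : (Set.univ : Set N).Definable arith {v | P v}

/-- A function from tuples of elements of `N` to `N` that is definable with parameters; a class for
the same reason as `DefPred`. -/
class DefFun (f : (α → N) → N) : Prop where
  definable : (Set.univ : Set N).DefinableFun arith f

theorem DefPred.congr {P Q : (α → N) → Prop} (hP : DefPred P) (h : ∀ v, P v ↔ Q v) : DefPred Q := by
  rwa [show Q = P from funext fun v => propext (h v).symm]

instance DefPred.and {P Q : (α → N) → Prop} [hP : DefPred P] [hQ : DefPred Q] :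
    DefPred fun v => P v ∧ Q v :=
  ⟨hP.definable.inter hQ.definable⟩

instance DefPred.or {P Q : (α → N) → Prop} [hP : DefPred P] [hQ : DefPred Q] :
    DefPred fun v => P v ∨ Q v :=
  ⟨hP.definable.union hQ.definable⟩

instance DefPred.not {P : (α → N) → Prop} [hP : DefPred P] : DefPred fun v => ¬ P v :=
  ⟨hP.definable.compl⟩

instance DefPred.imp {P Q : (α → N) → Prop} [DefPred P] [DefPred Q] :
    DefPred fun v => P v → Q v :=
  DefPred.congr (P := fun v => ¬ P v ∨ Q v) inferInstance fun _ => imp_iff_not_or.symm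

instance DefPred.iff {P Q : (α → N) → Prop} [DefPred P] [DefPred Q] :
    DefPred fun v => P v ↔ Q v :=
  DefPred.congr (P := fun v => (P v → Q v) ∧ (Q v → P v)) inferInstance
    fun _ => iff_iff_implies_and_implies.symm

instance DefPred.finite_forall {ι : Type*} [Finite ι] {P : ι → (α → N) → Prop}
    [hP : ∀ i, DefPred (P i)] : DefPred fun v => ∀ i, P i v := by
  refine ⟨?_⟩
  convert Set.definable_iInter_of_finite fun i => (hP i).definable using 1
  ext v
  simp only [Set.mem_ofPred_eq, Set.mem_iInter]

theorem DefPred.reindex {P : (α → N) → Prop} (hP : DefPred P) (g : α → β) :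
    DefPred fun v : β → N => P fun a => v (g a) :=
  ⟨hP.definable.preimage_comp g⟩

instance (priority := low) DefFun.reindex {f : (α → N) → N} [hf : DefFun f] (g : α → β) :
    DefFun fun v : β → N => f fun a => v (g a) :=
  ⟨(DefPred.reindex (P := fun w : Option α → N => f (fun a => w (some a)) = w none)
    ⟨hf.definable⟩ (Option.map g)).definable⟩

theorem DefPred.exists_tuple [Finite β] {P : (α → N) → (β → N) → Prop}
    (hP : DefPred fun w : α ⊕ β → N => P (fun a => w (.inl a)) fun b => w (.inr b)) :
    DefPred fun v => ∃ b, P v b :=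
  ⟨hP.definable.exists_of_finite⟩

instance DefPred.exists {P : (α → N) → N → Prop}
    [hP : DefPred fun w : Option α → N => P (fun a => w (some a)) (w none)] :
    DefPred fun v => ∃ x, P v x :=
  (DefPred.exists_tuple (P := fun v (b : Unit → N) => P v (b ()))
    (hP.reindex (fun o => o.elim (Sum.inr ()) Sum.inl : Option α → α ⊕ Unit))).congr
      fun _ => ⟨fun ⟨b, h⟩ => ⟨b (), h⟩, fun ⟨x, h⟩ => ⟨fun _ => x, h⟩⟩

instance DefPred.forall {P : (α → N) → N → Prop}
    [DefPred fun w : Option α → N => P (fun a => w (some a)) (w none)] :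
    DefPred fun v => ∀ x, P v x :=
  DefPred.congr (P := fun v => ¬ ∃ x, ¬ P v x) inferInstance fun _ => not_exists_not

theorem DefPred.subst [Finite α] {P : (α → N) → Prop} (hP : DefPred P)
    {f : α → (β → N) → N} (hf : ∀ a, DefFun (f a)) : DefPred fun v => P fun a => f a v :=
  ⟨Set.Definable.preimage_map (F := fun v a => f a v) (fun a => (hf a).definable) hP.definable⟩

theorem DefFun.subst [Finite α] {F : (α → N) → N} (hF : DefFun F)
    {f : α → (β → N) → N} (hf : ∀ a, DefFun (f a)) : DefFun fun v => F fun a => f a v :=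
  ⟨Set.DefinableFun.comp (g := fun v a => f a v) (fun a => (hf a).definable) hF.definable⟩

instance DefFun.var (i : α) : DefFun fun v : α → N => v i :=
  ⟨Set.DefinableFun.proj arith⟩

instance DefFun.const (c : N) : DefFun fun _ : α → N => c :=
  ⟨definableFun_const arith α (Set.mem_univ c)⟩

instance DefPred.eq {f g : (α → N) → N} [hf : DefFun f] [hg : DefFun g] :
    DefPred fun v => f v = g v :=
  ⟨hf.definable.ofPred_eq hg.definable⟩

theorem DefFun.of_rel {f : (α → N) → N} (R : (α → N) → N → Prop)
    [hR : DefPred fun w : Option α → N => R (fun a => w (some a)) (w none)]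
    (h : ∀ v y, R v y ↔ f v = y) : DefFun f :=
  ⟨(hR.congr fun _ => h _ _).definable⟩

instance DefFun.ite {P : (α → N) → Prop} [DecidablePred P] {f g : (α → N) → N} [hP : DefPred P]
    [hf : DefFun f] [hg : DefFun g] : DefFun fun v => if P v then f v else g v :=
  ⟨Set.DefinableFun.ite hP.definable hf.definable hg.definable⟩

instance DefFun.addM {f g : (α → N) → N} [hf : DefFun f] [hg : DefFun g] :
    DefFun fun v => addM (f v) (g v) := by
  have h : DefFun fun v : Fin 2 → N => Structure.funMap (L := arith) arithFunc.add v :=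
    ⟨Set.DefinableFun.of_empty (Set.DefinableFun.fun_symbol (L := arith) arithFunc.add)⟩
  exact h.subst (f := fun i v => ![f v, g v] i) (Fin.forall_fin_two.2 ⟨hf, hg⟩)

instance DefFun.mulM {f g : (α → N) → N} [hf : DefFun f] [hg : DefFun g] :
    DefFun fun v => mulM (f v) (g v) := by
  have h : DefFun fun v : Fin 2 → N => Structure.funMap (L := arith) arithFunc.mul v :=
    ⟨Set.DefinableFun.of_empty (Set.DefinableFun.fun_symbol (L := arith) arithFunc.mul)⟩
  exact h.subst (f := fun i v => ![f v, g v] i) (Fin.forall_fin_two.2 ⟨hf, hg⟩)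

instance DefPred.ltM {f g : (α → N) → N} [hf : DefFun f] [hg : DefFun g] :
    DefPred fun v => ltM (f v) (g v) := by
  have h : DefPred fun v : Fin 2 → N => Structure.RelMap (L := arith) arithRel.lt v := by
    refine ⟨(Set.empty_definable_iff.2
      ⟨Relations.formula (L := arith) arithRel.lt Term.var, ?_⟩).mono (Set.empty_subset _)⟩
    ext v
    exact (Formula.realize_rel (L := arith) (R := arithRel.lt) (ts := Term.var)).symm
  exact h.subst (f := fun i v => ![f v, g v] i) (Fin.forall_fin_two.2 ⟨hf, hg⟩)

/-- A unary function on `N` that is definable with parameters, in curried form. -/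
class DefFun₁ (g : N → N) : Prop where
  defFun : DefFun fun v : Unit → N => g (v ())

/-- A binary function on `N` that is definable with parameters, in curried form. -/
class DefFun₂ (G : N → N → N) : Prop where
  defFun : DefFun fun v : Fin 2 → N => G (v 0) (v 1)

/-- A subset of `N` that is definable with parameters. -/
class DefSet (D : Set N) : Prop where
  defPred : DefPred fun v : Unit → N => v () ∈ D

instance DefFun₁.app {g : N → N} [hg : DefFun₁ g] {f : (α → N) → N} [hf : DefFun f] :
    DefFun fun v => g (f v) :=
  hg.defFun.subst (f := fun _ => f) fun _ => hf

instance DefFun₂.app {G : N → N → N} [hG : DefFun₂ G] {f g : (α → N) → N} [hf : DefFun f]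
    [hg : DefFun g] : DefFun fun v => G (f v) (g v) :=
  hG.defFun.subst (f := ![f, g]) (Fin.forall_fin_two.2 ⟨hf, hg⟩)

instance DefSet.mem {D : Set N} [hD : DefSet D] {f : (α → N) → N} [hf : DefFun f] :
    DefPred fun v => f v ∈ D :=
  hD.defPred.subst (f := fun _ => f) fun _ => hf

theorem definableFun₁_iff {f : N → N} : DefinableFun₁ f ↔ DefFun₁ f := by
  constructor
  · intro h
    exact ⟨⟨(DefPred.reindex (P := fun v : Fin 2 → N => f (v 0) = v 1) ⟨h⟩
      ![some (), none]).definable⟩⟩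
  · intro h
    exact (inferInstance : DefPred fun v : Fin 2 → N => f (v 0) = v 1).definable

theorem DefinableFun.defFun {k : ℕ} {F : (Fin k → N) → N} (hF : DefinableFun F) : DefFun F := by
  have h := DefPred.reindex (P := fun v : Fin (k + 1) → N => F (fun i => v i.castSucc) =
    v (Fin.last k)) ⟨hF⟩ (Fin.lastCases (motive := fun _ => Option (Fin k)) none some)
  simp only [Fin.lastCases_castSucc, Fin.lastCases_last] at h
  exact ⟨h.definable⟩

theorem exists_cformula {n : ℕ} {P : ((Fin n → Bool) → N) → Prop} (hP : DefPred P) :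
    ∃ φ : CFormula N n, ∀ b, φ.Realize b ↔ P b := by
  obtain ⟨φ, hφ⟩ := Set.definable_iff_exists_formula_sum.1 hP.definable
  refine ⟨BoundedFormula.constantsVarsEquiv.symm
    (φ.relabel (Sum.map (fun x : (Set.univ : Set N) => (x : N)) id)), fun b => ?_⟩
  rw [Formula.Realize, ← BoundedFormula.realize_constantsVarsEquiv, Equiv.apply_symm_apply,
    ← Formula.Realize, Formula.realize_relabel]
  refine Iff.trans ?_ (Set.ext_iff.1 hφ b).symm
  rw [Set.mem_ofPred_eq]
  congr! 1
  ext (x | x) <;> rfl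

instance DefPred.realize {n : ℕ} (φ : CFormula N n) :
    DefPred fun b : (Fin n → Bool) → N => φ.Realize b := by
  refine ⟨Set.definable_iff_exists_formula_sum.2
    ⟨Formula.relabel (Sum.map (fun x : N => (⟨x, Set.mem_univ x⟩ : (Set.univ : Set N))) id)
      (BoundedFormula.constantsVarsEquiv φ), ?_⟩⟩
  ext b
  rw [Set.mem_ofPred_eq, Set.mem_ofPred_eq, Formula.realize_relabel, Formula.Realize,
    Formula.Realize, ← BoundedFormula.realize_constantsVarsEquiv (M := N)]
  congr! 1
  ext (x | x) <;> rfl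

theorem defPred_realizesAll {n : ℕ} {fmls : Set (CFormula N n)} (hf : fmls.Finite) :
    DefPred (RealizesAll fmls) := by
  have := hf.to_subtype
  exact (DefPred.finite_forall (hP := fun φ : fmls => DefPred.realize φ.1)).congr
    fun _ => Subtype.forall

end Definability

section Peano

/-- The structure `N` is a model of Peano arithmetic. -/
class PA (N : Type*) [arith.Structure N] : Prop where
  isPAModel : IsPAModel N

variable {N : Type*} [arith.Structure N] [PA N] {α : Type*}

theorem PA.induction {P : N → Prop} [definable : DefPred fun v : Fin 1 → N => P (v 0)]
    (zero : P (zeroM N)) (succ : ∀ x, P x → P (addM x (oneM N))) (x : N) : P x :=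
  (PA.isPAModel (N := N)).2.2.2.2.2.2.2.2 {x | P x} definable.definable zero succ x

theorem addM_zero (x : N) : addM x (zeroM N) = x := PA.isPAModel.1 x

theorem addM_succ (x y : N) : addM x (addM y (oneM N)) = addM (addM x y) (oneM N) :=
  PA.isPAModel.2.1 x y

theorem mulM_zero (x : N) : mulM x (zeroM N) = zeroM N := PA.isPAModel.2.2.1 x

theorem mulM_succ (x y : N) : mulM x (addM y (oneM N)) = addM (mulM x y) x :=
  PA.isPAModel.2.2.2.1 x y

theorem not_ltM_zero (x : N) : ¬ ltM x (zeroM N) := PA.isPAModel.2.2.2.2.1 x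

theorem ltM_succ (x y : N) : ltM x (addM y (oneM N)) ↔ ltM x y ∨ x = y :=
  PA.isPAModel.2.2.2.2.2.1 x y

theorem succ_ne_zeroM (x : N) : addM x (oneM N) ≠ zeroM N := PA.isPAModel.2.2.2.2.2.2.1 x

theorem succ_injM {x y : N} : addM x (oneM N) = addM y (oneM N) → x = y :=
  PA.isPAModel.2.2.2.2.2.2.2.1 x y

theorem zero_addM (x : N) : addM (zeroM N) x = x :=
  PA.induction (P := fun x => addM (zeroM N) x = x) (addM_zero _)
    (fun x h => by rw [addM_succ, h]) x

theorem addM_assoc (x y z : N) : addM (addM x y) z = addM x (addM y z) :=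
  PA.induction (P := fun z => addM (addM x y) z = addM x (addM y z))
    (by rw [addM_zero, addM_zero]) (fun z h => by rw [addM_succ, addM_succ, addM_succ, h]) z

theorem succ_addM (x y : N) : addM (addM x (oneM N)) y = addM (addM x y) (oneM N) :=
  PA.induction (P := fun y => addM (addM x (oneM N)) y = addM (addM x y) (oneM N))
    (by rw [addM_zero, addM_zero]) (fun y h => by rw [addM_succ, h, addM_succ]) y

theorem addM_comm (x y : N) : addM x y = addM y x :=
  PA.induction (P := fun y => addM x y = addM y x)
    (by rw [addM_zero, zero_addM]) (fun y h => by rw [addM_succ, h, succ_addM]) y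

theorem zero_mulM (x : N) : mulM (zeroM N) x = zeroM N :=
  PA.induction (P := fun x => mulM (zeroM N) x = zeroM N) (mulM_zero _)
    (fun x h => by rw [mulM_succ, h, addM_zero]) x

theorem mulM_addM (x y z : N) : mulM x (addM y z) = addM (mulM x y) (mulM x z) :=
  PA.induction (P := fun z => mulM x (addM y z) = addM (mulM x y) (mulM x z))
    (by rw [addM_zero, mulM_zero, addM_zero])
    (fun z h => by rw [addM_succ, mulM_succ, h, mulM_succ, addM_assoc]) z

theorem addM_mulM (x y z : N) : mulM (addM x y) z = addM (mulM x z) (mulM y z) :=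
  PA.induction (P := fun z => mulM (addM x y) z = addM (mulM x z) (mulM y z))
    (by rw [mulM_zero, mulM_zero, mulM_zero, addM_zero])
    (fun z h => by
      rw [mulM_succ, h, mulM_succ, mulM_succ, addM_assoc, addM_assoc, ← addM_assoc (mulM y z),
        addM_comm (mulM y z) x, addM_assoc]) z

theorem mulM_assoc (x y z : N) : mulM (mulM x y) z = mulM x (mulM y z) :=
  PA.induction (P := fun z => mulM (mulM x y) z = mulM x (mulM y z))
    (by rw [mulM_zero, mulM_zero, mulM_zero])
    (fun z h => by rw [mulM_succ, h, mulM_succ, mulM_addM]) z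

theorem mulM_one (x : N) : mulM x (oneM N) = x := by
  rw [← zero_addM (oneM N), mulM_succ, mulM_zero, zero_addM]

theorem one_mulM (x : N) : mulM (oneM N) x = x :=
  PA.induction (P := fun x => mulM (oneM N) x = x) (mulM_zero _)
    (fun x h => by rw [mulM_succ, h]) x

theorem mulM_comm (x y : N) : mulM x y = mulM y x :=
  PA.induction (P := fun y => mulM x y = mulM y x) (by rw [mulM_zero, zero_mulM])
    (fun y h => by rw [mulM_succ, h, addM_mulM, one_mulM]) y

theorem addM_right_cancel {x y z : N} : addM x z = addM y z → x = y :=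
  PA.induction (P := fun z => addM x z = addM y z → x = y)
    (by rw [addM_zero, addM_zero]; exact id)
    (fun z h e => h (succ_injM (by rwa [addM_succ, addM_succ] at e))) z

theorem eq_zero_or_eq_succ (x : N) : x = zeroM N ∨ ∃ y, x = addM y (oneM N) :=
  PA.induction (P := fun x => x = zeroM N ∨ ∃ y, x = addM y (oneM N)) (.inl rfl)
    (fun x _ => .inr ⟨x, rfl⟩) x

theorem ltM_iff_exists (x y : N) : ltM x y ↔ ∃ z, y = addM x (addM z (oneM N)) :=
  PA.induction (P := fun y => ltM x y ↔ ∃ z, y = addM x (addM z (oneM N)))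
    (iff_of_false (not_ltM_zero x)
      fun ⟨z, h⟩ => succ_ne_zeroM _ ((addM_succ x z).symm.trans h.symm))
    (fun y h => by
      rw [ltM_succ, h]
      constructor
      · rintro (⟨z, rfl⟩ | rfl)
        · exact ⟨addM z (oneM N), by rw [addM_succ x (addM z (oneM N))]⟩
        · exact ⟨zeroM N, by rw [zero_addM]⟩
      · rintro ⟨z, hz⟩
        rw [addM_succ] at hz
        obtain rfl := succ_injM hz
        rcases eq_zero_or_eq_succ z with rfl | ⟨w, rfl⟩
        · exact .inr (addM_zero x).symm
        · exact .inl ⟨w, rfl⟩) y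

theorem leM_iff_exists (x y : N) : leM x y ↔ ∃ z, y = addM x z := by
  rw [leM, ← ltM_succ, ltM_iff_exists]
  refine exists_congr fun z => ?_
  rw [addM_succ]
  exact ⟨succ_injM, fun h => by rw [h]⟩

theorem leM_total (x y : N) : leM x y ∨ leM y x :=
  PA.induction (P := fun y => (ltM x y ∨ x = y) ∨ (ltM y x ∨ y = x))
    (.inr ((leM_iff_exists _ x).2 ⟨x, (zero_addM x).symm⟩))
    (fun y h => by
      rcases h with h | h | h
      · exact .inl (.inl ((ltM_succ x y).2 h))
      · obtain ⟨z, rfl⟩ := (ltM_iff_exists y x).1 h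
        refine .inr ((leM_iff_exists _ _).2 ⟨z, ?_⟩)
        rw [addM_assoc, addM_comm z]
      · exact .inl (.inl ((ltM_succ x y).2 (.inr h.symm)))) y

theorem addM_eq_zero {x y : N} (h : addM x y = zeroM N) : y = zeroM N := by
  rcases eq_zero_or_eq_succ y with rfl | ⟨w, rfl⟩
  · rfl
  · exact absurd ((addM_succ x w).symm.trans h) (succ_ne_zeroM _)

theorem leM_antisymm {x y : N} (hxy : leM x y) (hyx : leM y x) : x = y := by
  obtain ⟨z, rfl⟩ := (leM_iff_exists _ _).1 hxy
  obtain ⟨w, hw⟩ := (leM_iff_exists _ _).1 hyx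
  have : addM w z = zeroM N := by
    refine addM_right_cancel (z := x) ?_
    rw [zero_addM, addM_comm, addM_comm w, ← addM_assoc, ← hw]
  rw [addM_eq_zero this, addM_zero]

theorem ltM_irrefl (x : N) : ¬ ltM x x := by
  rw [ltM_iff_exists]
  rintro ⟨z, h⟩
  refine succ_ne_zeroM z (addM_right_cancel (z := x) ?_)
  rw [zero_addM, addM_comm, ← h]

noncomputable instance : CommSemiring N where
  add := addM
  zero := zeroM N
  mul := mulM
  one := oneM N
  add_assoc := addM_assoc
  zero_add := zero_addM
  add_zero := addM_zero
  add_comm := addM_comm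
  left_distrib := mulM_addM
  right_distrib := addM_mulM
  zero_mul := zero_mulM
  mul_zero := mulM_zero
  mul_assoc := mulM_assoc
  one_mul := one_mulM
  mul_one := mulM_one
  mul_comm := mulM_comm
  nsmul := @nsmulRec N ⟨zeroM N⟩ ⟨addM⟩
  nsmul_zero _ := rfl
  nsmul_succ _ _ := rfl
  npow n x := powStd x n
  npow_zero _ := rfl
  npow_succ _ _ := rfl
  natCast := numeral N
  natCast_zero := rfl
  natCast_succ _ := rfl

noncomputable instance : LinearOrder N where
  le := leM
  lt := ltM
  le_refl x := .inr rfl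
  le_trans x y z hxy hyz := by
    obtain ⟨u, rfl⟩ := (leM_iff_exists _ _).1 hxy
    obtain ⟨v, rfl⟩ := (leM_iff_exists _ _).1 hyz
    exact (leM_iff_exists _ _).2 ⟨addM u v, addM_assoc _ _ _⟩
  le_antisymm _ _ := leM_antisymm
  le_total := leM_total
  lt_iff_le_not_ge x y := by
    constructor
    · intro h
      refine ⟨.inl h, fun h' => ltM_irrefl x ?_⟩
      rwa [← leM_antisymm (.inl h) h'] at h
    · rintro ⟨h | rfl, h'⟩
      · exact h
      · exact absurd (.inr rfl) h'
  toDecidableLE := Classical.decRel _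

theorem le_iff_exists_eq_add (x y : N) : x ≤ y ↔ ∃ z, y = x + z := leM_iff_exists x y

theorem addM_eq (x y : N) : addM x y = x + y := rfl
theorem mulM_eq (x y : N) : mulM x y = x * y := rfl
theorem zeroM_eq : zeroM N = 0 := rfl
theorem oneM_eq : oneM N = 1 := rfl
theorem ltM_iff (x y : N) : ltM x y ↔ x < y := Iff.rfl
theorem numeral_eq (n : ℕ) : numeral N n = (n : N) := rfl

theorem powStd_eq (d : N) (n : ℕ) : powStd d n = d ^ n := rfl

instance : IsOrderedCancelAddMonoid N where
  add_le_add_left x y h z := by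
    obtain ⟨u, rfl⟩ := (le_iff_exists_eq_add _ _).1 h
    exact (le_iff_exists_eq_add _ _).2 ⟨u, by ring⟩
  le_of_add_le_add_left x y z h := by
    obtain ⟨u, hu⟩ := (le_iff_exists_eq_add _ _).1 h
    refine (le_iff_exists_eq_add _ _).2 ⟨u, addM_right_cancel (z := x) ?_⟩
    rw [addM_eq, addM_eq, add_comm, hu]
    ring

instance : Nontrivial N := ⟨⟨0, 1, fun h => succ_ne_zeroM (0 : N) (by
  rw [addM_eq, oneM_eq, zero_add, ← h]; rfl)⟩⟩

instance : CanonicallyOrderedAdd N where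
  exists_add_of_le h := (le_iff_exists_eq_add _ _).1 h
  le_self_add _ y := (le_iff_exists_eq_add _ _).2 ⟨y, rfl⟩
  le_add_self _ y := (le_iff_exists_eq_add _ _).2 ⟨y, add_comm _ _⟩

theorem eq_zero_or_eq_add_one (x : N) : x = 0 ∨ ∃ y, x = y + 1 := eq_zero_or_eq_succ x

instance : NoZeroDivisors N where
  eq_zero_or_eq_zero_of_mul_eq_zero {x y} h := by
    rcases eq_zero_or_eq_add_one x with rfl | ⟨u, rfl⟩
    · exact .inl rfl
    rcases eq_zero_or_eq_add_one y with rfl | ⟨v, rfl⟩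
    · exact .inr rfl
    refine absurd ?_ (succ_ne_zeroM (u * v + u + v))
    exact Eq.trans (by rw [addM_eq, oneM_eq]; ring) h

instance : IsStrictOrderedRing N where
  le_of_add_le_add_left _ _ _ := le_of_add_le_add_left
  zero_le_one := zero_le
  mul_lt_mul_of_pos_left x hx y z h := by
    obtain ⟨u, rfl⟩ := exists_add_of_le h.le
    have hu : u ≠ 0 := by rintro rfl; simp at h
    rw [mul_add]
    exact lt_add_of_pos_right _ (pos_iff_ne_zero.2 (mul_ne_zero hx.ne' hu))
  mul_lt_mul_of_pos_right x hx y z h := by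
    obtain ⟨u, rfl⟩ := exists_add_of_le h.le
    have hu : u ≠ 0 := by rintro rfl; simp at h
    rw [add_mul]
    exact lt_add_of_pos_right _ (pos_iff_ne_zero.2 (mul_ne_zero hu hx.ne'))

theorem lt_add_one_iff {x y : N} : x < y + 1 ↔ x ≤ y := ltM_succ x y

theorem add_one_le_iff {x y : N} : x + 1 ≤ y ↔ x < y := by
  rw [← lt_add_one_iff, add_lt_add_iff_right]

theorem definable_induction {P : N → Prop} (definable : DefPred fun v : Fin 1 → N => P (v 0))
    (zero : P 0) (succ : ∀ x, P x → P (x + 1)) (x : N) : P x :=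
  PA.induction (definable := definable) zero succ x

instance DefFun.add {f g : (α → N) → N} [DefFun f] [DefFun g] : DefFun fun v => f v + g v :=
  DefFun.addM

instance DefFun.mul {f g : (α → N) → N} [DefFun f] [DefFun g] : DefFun fun v => f v * g v :=
  DefFun.mulM

instance DefPred.lt {f g : (α → N) → N} [DefFun f] [DefFun g] : DefPred fun v => f v < g v :=
  DefPred.ltM

instance DefPred.le {f g : (α → N) → N} [DefFun f] [DefFun g] : DefPred fun v => f v ≤ g v :=
  DefPred.congr (P := fun v => f v < g v ∨ f v = g v) inferInstance fun _ => le_iff_lt_or_eq.symm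

instance DefPred.dvd {f g : (α → N) → N} [DefFun f] [DefFun g] : DefPred fun v => f v ∣ g v :=
  (inferInstance : DefPred fun v => ∃ c, g v = f v * c)

end Peano

section Division

variable {N : Type*} [arith.Structure N] [PA N] {α : Type*}

theorem exists_eq_mul_add (x : N) {m : N} (hm : 0 < m) : ∃ q r, x = q * m + r ∧ r < m := by
  induction x using definable_induction with
  | definable => infer_instance
  | zero => exact ⟨0, 0, by ring, hm⟩
  | succ x ih =>
    obtain ⟨q, r, rfl, hr⟩ := ih
    rcases (add_one_le_iff.2 hr).lt_or_eq with h | h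
    · exact ⟨q, r + 1, by ring, h⟩
    · exact ⟨q + 1, 0, by rw [← h]; ring, hm⟩

open Classical in
noncomputable instance : Div N :=
  ⟨fun x m => if hm : 0 < m then (exists_eq_mul_add x hm).choose else 0⟩

open Classical in
noncomputable instance : Mod N :=
  ⟨fun x m => if hm : 0 < m then (exists_eq_mul_add x hm).choose_spec.choose else x⟩

theorem div_zero (x : N) : x / 0 = 0 := dif_neg (lt_irrefl 0)

theorem mod_zero (x : N) : x % 0 = x := dif_neg (lt_irrefl 0)

theorem mod_lt (x : N) {m : N} (hm : 0 < m) : x % m < m := by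
  have h := (exists_eq_mul_add x hm).choose_spec.choose_spec.2
  rwa [show x % m = _ from dif_pos hm]

theorem div_mul_add_mod (x m : N) : x / m * m + x % m = x := by
  rcases eq_zero_or_pos m with rfl | hm
  · rw [mod_zero, mul_zero, zero_add]
  · have h := (exists_eq_mul_add x hm).choose_spec.choose_spec.1
    rw [show x % m = _ from dif_pos hm, show x / m = _ from dif_pos hm]
    exact h.symm

theorem le_of_mul_add_le {m q r q' r' : N} (hr' : r' < m) (h : q * m + r ≤ q' * m + r') :
    q ≤ q' := by
  by_contra! hq
  refine h.not_gt ?_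
  calc q' * m + r' < q' * m + m := add_lt_add_right hr' _
    _ = (q' + 1) * m := (add_one_mul q' m).symm
    _ ≤ q * m := mul_le_mul_of_nonneg_right (add_one_le_iff.2 hq) zero_le
    _ ≤ q * m + r := le_self_add

theorem mul_add_div {m q r : N} (hr : r < m) : (q * m + r) / m = q := by
  have h := div_mul_add_mod (q * m + r) m
  have hm := mod_lt (q * m + r) (zero_le.trans_lt hr)
  exact le_antisymm (le_of_mul_add_le hr h.le) (le_of_mul_add_le hm h.ge)

theorem mul_add_mod {m q r : N} (hr : r < m) : (q * m + r) % m = r := by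
  have h := div_mul_add_mod (q * m + r) m
  rw [mul_add_div hr] at h
  exact add_left_cancel h

theorem mod_eq_iff {x m r : N} (hm : 0 < m) : x % m = r ↔ (∃ q, x = q * m + r) ∧ r < m := by
  constructor
  · rintro rfl
    exact ⟨⟨_, (div_mul_add_mod x m).symm⟩, mod_lt x hm⟩
  · rintro ⟨⟨q, rfl⟩, hr⟩
    exact mul_add_mod hr

theorem div_lt_of_lt_mul {x m k : N} (h : x < k * m) : x / m < k := by
  by_contra! hk
  refine h.not_ge ?_
  calc k * m ≤ x / m * m := mul_le_mul_of_nonneg_right hk zero_le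
    _ ≤ x / m * m + x % m := le_self_add
    _ = x := div_mul_add_mod x m

theorem mul_add_lt_mul {q r a b : N} (hr : r < a) (hq : q < b) : q * a + r < a * b :=
  calc q * a + r < q * a + a := add_lt_add_right hr _
    _ = a * (q + 1) := by ring
    _ ≤ a * b := mul_le_mul_of_nonneg_left (add_one_le_iff.2 hq) zero_le

theorem eq_div_mul_add_mod_mul (x a b : N) :
    x = x / a / b * (a * b) + (x / a % b * a + x % a) := by
  conv_lhs => rw [← div_mul_add_mod x a, ← div_mul_add_mod (x / a) b]
  ring

theorem div_mul_eq_div_div (x : N) {a b : N} (ha : 0 < a) (hb : 0 < b) :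
    x / (a * b) = x / a / b := by
  conv_lhs => rw [eq_div_mul_add_mod_mul x a b]
  exact mul_add_div (mul_add_lt_mul (mod_lt x ha) (mod_lt (x / a) hb))

theorem mod_mul_eq (x : N) {a b : N} (ha : 0 < a) (hb : 0 < b) :
    x % (a * b) = x / a % b * a + x % a := by
  conv_lhs => rw [eq_div_mul_add_mod_mul x a b]
  exact mul_add_mod (mul_add_lt_mul (mod_lt x ha) (mod_lt (x / a) hb))

instance DefFun.div {f g : (α → N) → N} [DefFun f] [DefFun g] : DefFun fun v => f v / g v := by
  refine DefFun.of_rel (fun v y => (∃ r, f v = y * g v + r ∧ r < g v) ∨ g v = 0 ∧ y = 0)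
    fun v y => ⟨?_, ?_⟩
  · rintro (⟨r, h, hr⟩ | ⟨h, rfl⟩)
    · rw [h, mul_add_div hr]
    · rw [h, div_zero]
  · rintro rfl
    rcases eq_zero_or_pos (g v) with h | h
    · exact .inr ⟨h, by rw [h, div_zero]⟩
    · exact .inl ⟨_, (div_mul_add_mod _ _).symm, mod_lt _ h⟩

instance DefFun.mod {f g : (α → N) → N} [DefFun f] [DefFun g] : DefFun fun v => f v % g v :=
  DefFun.of_rel (fun v y => f v = f v / g v * g v + y) fun v y =>
    ⟨fun h => add_left_cancel ((div_mul_add_mod _ _).trans h),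
      fun h => by rw [← h, div_mul_add_mod]⟩

end Division

section ChineseRemainder

/-- `a` is invertible modulo `b`, stated without subtraction. It stands in for coprimality, so that
no gcd is needed in `N`. -/
def InvertibleMod {R : Type*} [CommSemiring R] (a b : R) : Prop := ∃ u v, a * u = b * v + 1

theorem InvertibleMod.one {R : Type*} [CommSemiring R] (b : R) : InvertibleMod 1 b :=
  ⟨1, 0, by ring⟩

theorem InvertibleMod.mul {R : Type*} [CommSemiring R] {a a' b : R} (h : InvertibleMod a b)
    (h' : InvertibleMod a' b) : InvertibleMod (a * a') b := by
  obtain ⟨u, v, h⟩ := h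
  obtain ⟨u', v', h'⟩ := h'
  refine ⟨u * u', b * v * v' + v + v', ?_⟩
  calc a * a' * (u * u') = (a * u) * (a' * u') := by ring
    _ = _ := by rw [h, h']; ring

theorem InvertibleMod.exists_add_mul_eq {R : Type*} [CommSemiring R] {w k : R}
    (h : InvertibleMod w (k + 1)) (s y : R) : ∃ q q', s + w * q = q' * (k + 1) + y := by
  obtain ⟨u, v, h⟩ := h
  refine ⟨u * (y + s * k), s + v * (y + s * k), ?_⟩
  calc s + w * (u * (y + s * k)) = s + w * u * (y + s * k) := by ring
    _ = _ := by rw [h]; ring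

variable {N : Type*} [arith.Structure N] [PA N] {α : Type*}

instance DefPred.invertibleMod {f g : (α → N) → N} [DefFun f] [DefFun g] :
    DefPred fun v => InvertibleMod (f v) (g v) :=
  (inferInstance : DefPred fun v => ∃ x y, f v * x = g v * y + 1)

theorem add_mul_mod_eq_of_dvd {m w : N} (h : m ∣ w) (s q : N) : (s + w * q) % m = s % m := by
  rcases eq_zero_or_pos m with rfl | hm
  · rw [zero_dvd_iff.1 h, zero_mul, add_zero]
  · obtain ⟨r, rfl⟩ := h
    refine (mod_eq_iff hm).2 ⟨⟨s / m + r * q, ?_⟩, mod_lt s hm⟩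
    conv_lhs => rw [← div_mul_add_mod s m]
    ring

theorem exists_common_multiple_invertibleMod (μ : N → N) [DefFun₁ μ] {n : N}
    (hμ : ∀ i j, i < j → j < n → InvertibleMod (μ i) (μ j)) {m : N} (hm : m ≤ n) :
    ∃ w, (∀ i < m, μ i ∣ w) ∧ ∀ j, m ≤ j → j < n → InvertibleMod w (μ j) := by
  induction m using definable_induction with
  | definable => infer_instance
  | zero => exact ⟨1, fun i hi => absurd hi not_lt_zero, fun j _ _ => .one _⟩
  | succ m ih =>
    have hmn : m < n := add_one_le_iff.1 hm
    obtain ⟨w, hw, hinv⟩ := ih hmn.le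
    refine ⟨w * μ m, fun i hi => ?_, fun j hj hjn => ?_⟩
    · rcases (lt_add_one_iff.1 hi).lt_or_eq with h | rfl
      · exact (hw i h).mul_right _
      · exact dvd_mul_left _ _
    · have hmj : m < j := add_one_le_iff.1 hj
      exact (hinv j hmj.le hjn).mul (hμ m j hmj hjn)

theorem exists_mod_eq (μ g : N → N) [DefFun₁ μ] [DefFun₁ g] {n : N}
    (hμ : ∀ i j, i < j → j < n → InvertibleMod (μ i) (μ j)) (hg : ∀ i < n, g i < μ i) :
    ∃ s, ∀ i < n, s % μ i = g i := by
  suffices H : ∀ m, m ≤ n → ∃ s, ∀ i < m, s % μ i = g i from H n le_rfl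
  intro m
  induction m using definable_induction with
  | definable => infer_instance
  | zero => exact fun _ => ⟨0, fun i hi => absurd hi not_lt_zero⟩
  | succ m ih =>
    intro hm
    have hmn : m < n := add_one_le_iff.1 hm
    obtain ⟨s, hs⟩ := ih hmn.le
    obtain ⟨w, hw, hinv⟩ := exists_common_multiple_invertibleMod μ hμ hmn.le
    have hpos : 0 < μ m := zero_le.trans_lt (hg m hmn)
    obtain ⟨k, hk⟩ := (eq_zero_or_eq_add_one (μ m)).resolve_left hpos.ne'
    have hwk : InvertibleMod w (k + 1) := hk ▸ hinv m le_rfl hmn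
    obtain ⟨q, q', hq⟩ := hwk.exists_add_mul_eq s (g m)
    refine ⟨s + w * q, fun i hi => ?_⟩
    rcases (lt_add_one_iff.1 hi).lt_or_eq with h | rfl
    · rw [add_mul_mod_eq_of_dvd (hw i h), hs i h]
    · exact (mod_eq_iff hpos).2 ⟨⟨q', hk ▸ hq⟩, hg i hmn⟩

theorem exists_upper_bound (g : N → N) [DefFun₁ g] (n : N) : ∃ B, ∀ i < n, g i ≤ B := by
  induction n using definable_induction with
  | definable => infer_instance
  | zero => exact ⟨0, fun i hi => absurd hi not_lt_zero⟩
  | succ n ih =>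
    obtain ⟨B, hB⟩ := ih
    refine ⟨B + g n, fun i hi => ?_⟩
    rcases (lt_add_one_iff.1 hi).lt_or_eq with h | rfl
    · exact (hB i h).trans le_self_add
    · exact le_add_self

theorem exists_pos_common_multiple (n : N) : ∃ t, 0 < t ∧ ∀ i ≤ n, 0 < i → i ∣ t := by
  induction n using definable_induction with
  | definable => infer_instance
  | zero => exact ⟨1, one_pos, fun i hi h => absurd hi h.not_ge⟩
  | succ n ih =>
    obtain ⟨t, ht, h⟩ := ih
    refine ⟨t * (n + 1), mul_pos ht (add_pos_of_nonneg_of_pos zero_le one_pos),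
      fun i hi hi0 => ?_⟩
    rcases hi.lt_or_eq with hi | rfl
    · exact (h i (lt_add_one_iff.1 hi) hi0).mul_right _
    · exact dvd_mul_left _ _

-- With `j = i + e` and `t = e * r`, an inverse of `1 + (i + 1) * t` modulo `1 + (j + 1) * t` is
-- `-(j + 1) ^ 2 * r`, where `-1` is represented by `k + 1 = (j + 1) * t`.
theorem invertibleMod_one_add_mul {t i j : N} (ht : 0 < t) (hij : i < j)
    (h : ∀ e ≤ j, 0 < e → e ∣ t) : InvertibleMod (1 + (i + 1) * t) (1 + (j + 1) * t) := by
  obtain ⟨e, rfl⟩ := exists_add_of_le hij.le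
  obtain ⟨r, hr⟩ := h e le_add_self (by simpa using hij)
  have hpos : 0 < (i + e + 1) * t := mul_pos (add_pos_of_nonneg_of_pos zero_le one_pos) ht
  obtain ⟨k, hk⟩ := (eq_zero_or_eq_add_one _).resolve_left hpos.ne'
  have inverse_neg : (1 + (i + 1) * t) * ((i + e + 1) * (i + e + 1) * r) + 1 =
      (1 + (i + e + 1) * t) * ((i + 1) * (i + e + 1) * r + 1) := by
    rw [hr]
    ring
  refine ⟨(i + e + 1) * (i + e + 1) * r * (k + 1),
    (i + 1) * (i + e + 1) * r * (k + 1) + k, add_right_cancel (b := 1 + (i + e + 1) * t) ?_⟩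
  calc _ = ((1 + (i + 1) * t) * ((i + e + 1) * (i + e + 1) * r) + 1) * (k + 1) + 1 := by
        rw [hk]; ring
    _ = _ := by rw [inverse_neg, hk]; ring

/-- Gödel's `β` function, decoding the `i`-th entry of the sequence coded by the pair `s`, `t`. -/
noncomputable def beta (s t i : N) : N := s % (1 + (i + 1) * t)

instance DefFun.beta {f g h : (α → N) → N} [DefFun f] [DefFun g] [DefFun h] :
    DefFun fun v => beta (f v) (g v) (h v) :=
  (inferInstance : DefFun fun v => f v % (1 + (h v + 1) * g v))

theorem exists_beta_eq (g : N → N) [DefFun₁ g] (n : N) : ∃ s t, ∀ i < n, beta s t i = g i := by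
  obtain ⟨B, hB⟩ := exists_upper_bound g n
  obtain ⟨t, ht, hdvd⟩ := exists_pos_common_multiple n
  have htB : 0 < t * (B + 1) := mul_pos ht (add_pos_of_nonneg_of_pos zero_le one_pos)
  have hBt : B < t * (B + 1) :=
    add_one_le_iff.1 (le_mul_of_one_le_left zero_le ((add_one_le_iff.2 ht).trans' le_add_self))
  have : DefFun₁ fun i : N => 1 + (i + 1) * (t * (B + 1)) := ⟨inferInstance⟩
  obtain ⟨s, hs⟩ := exists_mod_eq (fun i => 1 + (i + 1) * (t * (B + 1))) g (n := n)
    (fun i j hij hj => invertibleMod_one_add_mul htB hij fun e he he0 =>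
      (hdvd e (he.trans hj.le) he0).mul_right _)
    (fun i hi => calc
      g i < t * (B + 1) := (hB i hi).trans_lt hBt
      _ ≤ (i + 1) * (t * (B + 1)) := le_mul_of_one_le_left zero_le le_add_self
      _ ≤ 1 + (i + 1) * (t * (B + 1)) := le_add_self)
  exact ⟨s, t * (B + 1), hs⟩

end ChineseRemainder

section Recursion

variable {N : Type*} [arith.Structure N] [PA N] {α : Type*}

/-- The sequence coded by `s`, `t` starts with `a` and follows the recursion step `G` up to its
entry with index `z`. -/
def IsRecSeq (a : N) (G : N → N → N) (s t z : N) : Prop :=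
  beta s t 0 = a ∧ ∀ i < z, beta s t (i + 1) = G i (beta s t i)

theorem exists_isRecSeq (a : N) (G : N → N → N) [DefFun₂ G] (z : N) :
    ∃ s t, IsRecSeq a G s t z := by
  unfold IsRecSeq
  induction z using definable_induction with
  | definable => infer_instance
  | zero =>
    have : DefFun₁ fun _ : N => a := ⟨inferInstance⟩
    obtain ⟨s, t, h⟩ := exists_beta_eq (fun _ => a) 1
    exact ⟨s, t, h 0 one_pos, fun i hi => absurd hi not_lt_zero⟩
  | succ z ih =>
    obtain ⟨s, t, h₀, h⟩ := ih
    have : DefFun₁ fun i => if i ≤ z then beta s t i else G z (beta s t z) := ⟨inferInstance⟩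
    obtain ⟨s', t', h'⟩ :=
      exists_beta_eq (fun i => if i ≤ z then beta s t i else G z (beta s t z)) (z + 1 + 1)
    have eq_of_le : ∀ i ≤ z, beta s' t' i = beta s t i := fun i hi => by
      rw [h' i (lt_add_one_iff.2 (hi.trans le_self_add)), if_pos hi]
    refine ⟨s', t', by rw [eq_of_le 0 zero_le, h₀], fun i hi => ?_⟩
    rcases (lt_add_one_iff.1 hi).lt_or_eq with hiz | rfl
    · rw [eq_of_le _ (add_one_le_iff.2 hiz), eq_of_le i hiz.le, h i hiz]
    · rw [h' _ (lt_add_one_iff.2 le_rfl), if_neg (lt_add_one_iff.2 le_rfl).not_ge,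
        eq_of_le i le_rfl]

theorem IsRecSeq.beta_eq {a : N} {G : N → N → N} {s t s' t' z : N} (h : IsRecSeq a G s t z)
    (h' : IsRecSeq a G s' t' z) : beta s t z = beta s' t' z := by
  suffices H : ∀ i, i ≤ z → beta s t i = beta s' t' i from H z le_rfl
  intro i
  induction i using definable_induction with
  | definable => infer_instance
  | zero => exact fun _ => h.1.trans h'.1.symm
  | succ i ih =>
    intro hi
    rw [h.2 i (add_one_le_iff.1 hi), h'.2 i (add_one_le_iff.1 hi), ih (le_self_add.trans hi)]

/-- The function defined inside `N` by primitive recursion from the initial value `a` and the step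
`G`; it satisfies the recursion equations when `G` is definable, and is junk otherwise. -/
noncomputable def defRec (a : N) (G : N → N → N) (z : N) : N :=
  Classical.epsilon fun y => ∃ s t, IsRecSeq a G s t z ∧ beta s t z = y

theorem defRec_eq {a : N} {G : N → N → N} {s t z : N} (h : IsRecSeq a G s t z) :
    defRec a G z = beta s t z := by
  obtain ⟨s', t', h', heq⟩ :=
    Classical.epsilon_spec (p := fun y => ∃ s t, IsRecSeq a G s t z ∧ beta s t z = y)
      ⟨_, s, t, h, rfl⟩
  exact heq.symm.trans (h'.beta_eq h)

theorem defRec_zero (a : N) (G : N → N → N) [DefFun₂ G] : defRec a G 0 = a := by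
  obtain ⟨s, t, h⟩ := exists_isRecSeq a G 0
  rw [defRec_eq h, h.1]

theorem defRec_add_one (a : N) (G : N → N → N) [DefFun₂ G] (z : N) :
    defRec a G (z + 1) = G z (defRec a G z) := by
  obtain ⟨s, t, h⟩ := exists_isRecSeq a G (z + 1)
  have hz : IsRecSeq a G s t z := ⟨h.1, fun i hi => h.2 i (hi.trans (lt_add_one_iff.2 le_rfl))⟩
  rw [defRec_eq h, defRec_eq hz, h.2 z (lt_add_one_iff.2 le_rfl)]

theorem DefFun.defRec [Finite α] {a f : (α → N) → N} {G : (α → N) → N → N → N} [DefFun a]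
    [DefFun f] (hG : DefFun fun w : Option (Option α) → N =>
      G (fun i => w (some (some i))) (w (some none)) (w none)) :
    DefFun fun v => defRec (a v) (G v) (f v) := by
  have (v : α → N) : DefFun₂ (G v) :=
    ⟨hG.subst (f := fun o w => o.elim (w 1) fun o => o.elim (w 0) v) fun
      | none => .var 1
      | some none => .var 0
      | some (some i) => .const (v i)⟩
  have {β : Type _} (r : α → β) (f g : (β → N) → N) [hf : DefFun f] [hg : DefFun g] :
      DefFun fun w : β → N => G (fun i => w (r i)) (f w) (g w) :=
    hG.subst (f := fun o w => o.elim (g w) fun o => o.elim (f w) fun i => w (r i)) fun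
      | none => hg
      | some none => hf
      | some (some i) => .var (r i)
  refine DefFun.of_rel (fun v y => ∃ s t, (Arith.beta s t 0 = a v ∧ ∀ i < f v,
      Arith.beta s t (i + 1) = G v i (Arith.beta s t i)) ∧ Arith.beta s t (f v) = y)
    fun v y => ⟨?_, ?_⟩
  · rintro ⟨s, t, h, rfl⟩
    exact defRec_eq h
  · rintro rfl
    obtain ⟨s, t, h⟩ := exists_isRecSeq (a v) (G v) (f v)
    exact ⟨s, t, h, (defRec_eq h).symm⟩

end Recursion

section Counting

variable {N : Type*} [arith.Structure N] [PA N] {α : Type*}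

open Classical in
/-- The number, computed inside `N`, of elements of the definable set `D` below `z`. -/
noncomputable def count (D : Set N) (z : N) : N :=
  defRec 0 (fun i y => if i ∈ D then y + 1 else y) z

instance DefFun.count [Finite α] {D : (α → N) → Set N} {f : (α → N) → N} [DefFun f]
    [hD : DefPred fun w : Option α → N => w none ∈ D fun i => w (some i)] :
    DefFun fun v => count (D v) (f v) := by
  have := hD.reindex some
  exact DefFun.defRec inferInstance

section

variable (D : Set N) [DefSet D]

open Classical in
instance : DefFun₂ fun i y : N => if i ∈ D then y + 1 else y := ⟨inferInstance⟩

theorem count_zero : count D 0 = 0 := defRec_zero 0 _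

open Classical in
theorem count_add_one (z : N) :
    count D (z + 1) = if z ∈ D then count D z + 1 else count D z :=
  defRec_add_one 0 _ z

end

variable {D : Set N} [DefSet D]

theorem count_add_one_of_mem {z : N} (hz : z ∈ D) : count D (z + 1) = count D z + 1 := by
  rw [count_add_one, if_pos hz]

theorem count_add_one_of_notMem {z : N} (hz : z ∉ D) : count D (z + 1) = count D z := by
  rw [count_add_one, if_neg hz]

theorem count_le_count_add_one (z : N) : count D z ≤ count D (z + 1) := by
  by_cases hz : z ∈ D
  · exact (count_add_one_of_mem hz).symm ▸ le_self_add
  · exact (count_add_one_of_notMem hz).ge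

theorem count_mono {y z : N} (h : y ≤ z) : count D y ≤ count D z := by
  induction z using definable_induction with
  | definable => infer_instance
  | zero => rw [nonpos_iff_eq_zero.1 h]
  | succ z ih =>
    rcases h.lt_or_eq with h | rfl
    · exact (ih (lt_add_one_iff.1 h)).trans (count_le_count_add_one z)
    · exact le_rfl

theorem count_lt_count {x z : N} (hx : x ∈ D) (hxz : x < z) : count D x < count D z :=
  calc count D x < count D x + 1 := lt_add_one_iff.2 le_rfl
    _ = count D (x + 1) := (count_add_one_of_mem hx).symm
    _ ≤ count D z := count_mono (add_one_le_iff.2 hxz)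

theorem count_injOn : Set.InjOn (count D) D := by
  intro x hx y hy h
  rcases lt_trichotomy x y with hxy | rfl | hxy
  · exact absurd h (count_lt_count hx hxy).ne
  · rfl
  · exact absurd h (count_lt_count hy hxy).ne'

theorem exists_count_eq {y z : N} (h : y < count D z) : ∃ x < z, x ∈ D ∧ count D x = y := by
  induction z using definable_induction with
  | definable => infer_instance
  | zero => exact absurd (count_zero D ▸ h) not_lt_zero
  | succ z ih =>
    by_cases hy : y < count D z
    · obtain ⟨x, hx, hxD⟩ := ih hy
      exact ⟨x, hx.trans (lt_add_one_iff.2 le_rfl), hxD⟩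
    · by_cases hz : z ∈ D
      · rw [count_add_one_of_mem hz] at h
        exact ⟨z, lt_add_one_iff.2 le_rfl, hz, le_antisymm (not_lt.1 hy) (lt_add_one_iff.1 h)⟩
      · exact absurd (count_add_one_of_notMem hz ▸ h) hy

theorem count_le_add {D₁ D₂ : Set N} [DefSet D₁] [DefSet D₂] (h : D ⊆ D₁ ∪ D₂) (z : N) :
    count D z ≤ count D₁ z + count D₂ z := by
  induction z using definable_induction with
  | definable => infer_instance
  | zero => simp only [count_zero, add_zero, le_refl]
  | succ z ih =>
    by_cases hz : z ∈ D
    · rw [count_add_one_of_mem hz]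
      refine (add_le_add_left ih 1).trans ?_
      rcases h hz with hz | hz
      · rw [count_add_one_of_mem hz, add_right_comm]
        exact add_le_add_right (count_le_count_add_one z) _
      · rw [count_add_one_of_mem hz, ← add_assoc]
        exact add_le_add_left (add_le_add_left (count_le_count_add_one z) _) _
    · rw [count_add_one_of_notMem hz]
      exact ih.trans (add_le_add (count_le_count_add_one z) (count_le_count_add_one z))

theorem count_eq_zero {z : N} (h : ∀ x < z, x ∉ D) : count D z = 0 := by
  by_contra! h₀
  obtain ⟨x, hxz, hx, -⟩ := exists_count_eq (pos_iff_ne_zero.2 h₀)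
  exact h x hxz hx

theorem count_eq_self {z : N} (h : ∀ x < z, x ∈ D) : count D z = z := by
  induction z using definable_induction with
  | definable => infer_instance
  | zero => exact count_zero D
  | succ z ih =>
    rw [count_add_one_of_mem (h z (lt_add_one_iff.2 le_rfl)),
      ih fun x hx => h x (hx.trans (lt_add_one_iff.2 le_rfl))]

theorem count_le_one (h : D.Subsingleton) (z : N) : count D z ≤ 1 := by
  by_contra! h₁
  obtain ⟨x, -, hx, hx₁⟩ := exists_count_eq h₁
  obtain ⟨y, -, hy, hy₀⟩ := exists_count_eq (one_pos.trans h₁)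
  exact one_ne_zero (hx₁.symm.trans ((congrArg _ (h hx hy)).trans hy₀))

theorem pigeonhole {g : N → N} [DefFun₁ g] {c c' : N}
    (hmaps : Set.MapsTo g (Set.Iio c) (Set.Iio c')) (hinj : Set.InjOn g (Set.Iio c)) :
    c ≤ c' := by
  have defSet (m : N) : DefSet {i | i < c ∧ g i < m} :=
    ⟨(inferInstance : DefPred fun v : Unit → N => v () < c ∧ g (v ()) < m)⟩
  suffices H : ∀ m, count {i | i < c ∧ g i < m} c ≤ m by
    rw [← count_eq_self (D := {i | i < c ∧ g i < c'}) fun i hi => ⟨hi, hmaps hi⟩]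
    exact H c'
  intro m
  induction m using definable_induction with
  | definable =>
    have : DefPred fun w : Option (Fin 1) → N => w none ∈ {i | i < c ∧ g i < w (some 0)} :=
      (inferInstance : DefPred fun w : Option (Fin 1) → N => w none < c ∧ g (w none) < w (some 0))
    have := DefFun.count (D := fun v : Fin 1 → N => {i | i < c ∧ g i < v 0}) (f := fun _ => c)
    infer_instance
  | zero => exact (count_eq_zero fun i _ hi => not_lt_zero hi.2).le
  | succ m ih =>
    have : DefSet {i | i < c ∧ g i = m} :=
      ⟨(inferInstance : DefPred fun v : Unit → N => v () < c ∧ g (v ()) = m)⟩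
    have hsub : {i | i < c ∧ g i < m + 1} ⊆ {i | i < c ∧ g i < m} ∪ {i | i < c ∧ g i = m} :=
      fun i hi => (lt_add_one_iff.1 hi.2).lt_or_eq.imp (.intro hi.1) (.intro hi.1)
    have hone : {i | i < c ∧ g i = m}.Subsingleton :=
      fun i hi j hj => hinj hi.1 hj.1 (hi.2.trans hj.2.symm)
    exact (count_le_add hsub c).trans (add_le_add ih (count_le_one hone c))

theorem exists_defFun₁_of_rel {R : N → N → Prop} [hR : DefPred fun v : Fin 2 → N => R (v 0) (v 1)]
    (hfun : ∀ x y z, R x y → R x z → y = z) : ∃ g : N → N, DefFun₁ g ∧ ∀ x y, R x y → g x = y := by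
  classical
  let g : N → N := fun x => if h : ∃ y, R x y then h.choose else 0
  have hg (x y : N) (h : R x y) : g x = y := by
    have hx : ∃ y, R x y := ⟨y, h⟩
    exact (dif_pos hx).trans (hfun _ _ _ hx.choose_spec h)
  have (β : Type) (i j : β) : DefPred fun w : β → N => R (w i) (w j) := hR.reindex ![i, j]
  refine ⟨g, ⟨DefFun.of_rel (fun v y => R (v ()) y ∨ (¬ ∃ z, R (v ()) z) ∧ y = 0)
    fun v y => ⟨?_, ?_⟩⟩, hg⟩
  · rintro (h | ⟨h, rfl⟩)
    · exact hg _ _ h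
    · exact dif_neg h
  · rintro rfl
    by_cases h : ∃ z, R (v ()) z
    · obtain ⟨z, hz⟩ := h
      exact .inl (hg _ _ hz ▸ hz)
    · exact .inr ⟨h, dif_neg h⟩

theorem internalCard_count (D : Set N) [DefSet D] (z : N) :
    InternalCard (D ∩ Set.Iio z) (count D z) := by
  obtain ⟨f, hf, hf_eq⟩ := exists_defFun₁_of_rel
    (R := fun y x => (x ∈ D ∧ x < z) ∧ count D x = y)
    fun _ _ _ h h' => count_injOn h.1.1 h'.1.1 (h.2.trans h'.2.symm)
  have hf_count {y : N} (hy : y < count D z) : (f y ∈ D ∧ f y < z) ∧ count D (f y) = y := by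
    obtain ⟨x, hxz, hx, rfl⟩ := exists_count_eq hy
    rw [hf_eq _ x ⟨⟨hx, hxz⟩, rfl⟩]
    exact ⟨⟨hx, hxz⟩, rfl⟩
  refine ⟨f, definableFun₁_iff.2 hf, fun y hy => (hf_count hy).1, fun y hy y' hy' h => ?_,
    fun x hx => ⟨count D x, count_lt_count hx.1 hx.2, hf_eq _ x ⟨hx, rfl⟩⟩⟩
  rw [← (hf_count hy).2, ← (hf_count hy').2, h]

theorem InternalCard.le_count {c z : N} (h : InternalCard D c) (hD : D ⊆ Set.Iio z) :
    c ≤ count D z := by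
  obtain ⟨f, hf, hbij⟩ := h
  have := definableFun₁_iff.1 hf
  have : DefFun₁ fun i => count D (f i) := ⟨inferInstance⟩
  exact pigeonhole (fun i hi => count_lt_count (hbij.mapsTo hi) (hD (hbij.mapsTo hi)))
    (count_injOn.comp hbij.injOn hbij.mapsTo)

theorem InternalCard.mul_le {D : Set N} {c m B : N} (h : InternalCard D c) {G : N → N → N}
    [DefFun₂ G] (hmaps : ∀ x ∈ D, ∀ s < m, G x s < B)
    (hinj : ∀ x ∈ D, ∀ s < m, ∀ y ∈ D, ∀ t < m, G x s = G y t → x = y ∧ s = t) : c * m ≤ B := by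
  obtain ⟨f, hf, hbij⟩ := h
  have := definableFun₁_iff.1 hf
  have : DefFun₁ fun i => G (f (i / m)) (i % m) := ⟨inferInstance⟩
  have hdiv {i : N} (hi : i < c * m) : i / m < c := div_lt_of_lt_mul hi
  have hmod {i : N} (hi : i < c * m) : i % m < m :=
    mod_lt i (pos_of_mul_pos_right (zero_le.trans_lt hi) zero_le)
  refine pigeonhole (g := fun i => G (f (i / m)) (i % m))
    (fun i hi => hmaps _ (hbij.mapsTo (hdiv hi)) _ (hmod hi)) fun i hi j hj hij => ?_
  obtain ⟨hf_eq, hmod_eq⟩ := hinj _ (hbij.mapsTo (hdiv hi)) _ (hmod hi) _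
    (hbij.mapsTo (hdiv hj)) _ (hmod hj) hij
  rw [← div_mul_add_mod i m, ← div_mul_add_mod j m, hbij.injOn (hdiv hi) (hdiv hj) hf_eq, hmod_eq]

end Counting

section Digits

variable {N : Type*} [arith.Structure N] [PA N] {α : Type*}

theorem lt_two_iff {x : N} : x < 2 ↔ x = 0 ∨ x = 1 := by
  rw [← one_add_one_eq_two, lt_add_one_iff, le_iff_lt_or_eq, ← zero_add (1 : N), lt_add_one_iff,
    nonpos_iff_eq_zero]

theorem digitB_iff {x : N} {i : ℕ} : digitB x i ↔ x / 2 ^ i % 2 = 1 := by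
  simp only [digitB, numeral_eq, addM_eq, mulM_eq, ltM_iff, Nat.cast_pow, Nat.cast_ofNat]
  constructor
  · rintro ⟨u, v, rfl, hv⟩
    rw [show u * 2 ^ (i + 1) + (2 ^ i + v) = (u * 2 + 1) * 2 ^ i + v by ring, mul_add_div hv,
      mul_add_mod one_lt_two]
  · intro h
    refine ⟨x / 2 ^ i / 2, x % 2 ^ i, ?_, mod_lt x (pow_pos two_pos i)⟩
    conv_lhs => rw [eq_div_mul_add_mod_mul x (2 ^ i) 2, h]
    ring

instance DefPred.digitB {f : (α → N) → N} [DefFun f] (i : ℕ) :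
    DefPred fun v => digitB (f v) i := by
  unfold Arith.digitB
  infer_instance

theorem mod_two_pow_eq_of_digitB_iff {x y : N} {m : ℕ}
    (h : ∀ i < m, digitB x i ↔ digitB y i) : x % 2 ^ m = y % 2 ^ m := by
  induction m with
  | zero =>
    have mod_one (z : N) : z % 1 = 0 := (mod_eq_iff one_pos).2 ⟨⟨z, by ring⟩, one_pos⟩
    rw [pow_zero, mod_one, mod_one]
  | succ m ih =>
    have hm := h m m.lt_succ_self
    rw [digitB_iff, digitB_iff] at hm
    have last_digit : x / 2 ^ m % 2 = y / 2 ^ m % 2 := by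
      rcases lt_two_iff.1 (mod_lt (x / 2 ^ m) (two_pos (α := N))) with hx | hx <;>
        rcases lt_two_iff.1 (mod_lt (y / 2 ^ m) (two_pos (α := N))) with hy | hy <;> simp_all
    have hpos : (0 : N) < 2 ^ m := pow_pos two_pos m
    rw [pow_succ, mod_mul_eq x hpos two_pos, mod_mul_eq y hpos two_pos, last_digit,
      ih fun i hi => h i (hi.trans m.lt_succ_self)]

theorem natCast_le_of_not_isStd {a : N} (ha : ¬ IsStd a) (m : ℕ) : (m : N) ≤ a := by
  induction m with
  | zero => exact Nat.cast_zero.trans_le zero_le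
  | succ m ih =>
    rw [Nat.cast_succ, add_one_le_iff]
    exact ih.lt_of_ne fun e => ha ⟨m, e.symm⟩

theorem IsPow2.two_pow_dvd {a d : N} (ha : ¬ IsStd a) (hd : IsPow2 a d) (m : ℕ) : 2 ^ m ∣ d := by
  obtain ⟨f, -, -, hf, rfl⟩ := hd
  have f_add : ∀ z, z + (m : N) ≤ a → f (z + m) = f z * 2 ^ m := by
    induction m with
    | zero => exact fun z _ => by rw [Nat.cast_zero, add_zero, pow_zero, mul_one]
    | succ m ih =>
      intro z hz
      rw [Nat.cast_succ, ← add_assoc, add_one_le_iff] at hz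
      calc f (z + (m + 1 : ℕ)) = f (z + m + 1) := by rw [Nat.cast_succ, add_assoc]
        _ = f (z + m) + f (z + m) := hf _ hz
        _ = f z * 2 ^ (m + 1) := by rw [ih z hz.le]; ring
  obtain ⟨z, rfl⟩ := exists_add_of_le (natCast_le_of_not_isStd ha m)
  rw [add_comm, f_add z (add_comm z (m : N)).le]
  exact dvd_mul_left _ _

end Digits

section TupleCode

variable {N : Type*} [arith.Structure N] [PA N] {α : Type*} {n : ℕ}

theorem sum_mul_pow_lt {d : N} {K : ℕ} {x : Fin K → N} (hx : ∀ j, x j < d) :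
    ∑ j, x j * d ^ (j : ℕ) < d ^ K := by
  induction K with
  | zero => simp only [Finset.univ_eq_empty, Finset.sum_empty, pow_zero, one_pos]
  | succ K ih =>
    rw [Fin.sum_univ_castSucc, add_comm, pow_succ]
    exact mul_add_lt_mul (ih fun j => hx j.castSucc) (hx (Fin.last K))

theorem sum_mul_pow_div_mod {d : N} {K : ℕ} {x : Fin K → N} (hx : ∀ j, x j < d) (i : Fin K) :
    (∑ j, x j * d ^ (j : ℕ)) / d ^ (i : ℕ) % d = x i := by
  induction K with
  | zero => exact i.elim0
  | succ K ih =>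
    have hd : 0 < d := zero_le.trans_lt (hx i)
    have split_first : ∑ j, x j * d ^ (j : ℕ) =
        (∑ j : Fin K, x j.succ * d ^ (j : ℕ)) * d + x 0 := by
      simp only [Fin.sum_univ_succ, Fin.val_zero, pow_zero, mul_one, Fin.val_succ, pow_succ,
        ← mul_assoc, Finset.sum_mul]
      exact add_comm _ _
    rw [split_first]
    induction i using Fin.cases with
    | zero =>
      have div_one (z : N) : z / 1 = z := by
        simpa only [mul_one, add_zero] using mul_add_div (q := z) (one_pos (α := N))
      rw [Fin.val_zero, pow_zero, div_one, mul_add_mod (hx 0)]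
    | succ i =>
      rw [Fin.val_succ, pow_succ', div_mul_eq_div_div _ hd (pow_pos hd _), mul_add_div (hx 0),
        ih fun j => hx j.succ]

theorem binOfFin_bijective (n : ℕ) : Function.Bijective (binOfFin (n := n)) := by
  refine (Fintype.bijective_iff_injective_and_card _).2 ⟨fun j j' h => ?_, by simp⟩
  refine Fin.ext (Nat.eq_of_testBit_eq fun i => ?_)
  rcases lt_or_ge i n with hi | hi
  · exact congrFun h ⟨i, hi⟩
  · have hle := Nat.pow_le_pow_right two_pos hi
    rw [Nat.testBit_lt_two_pow (j.2.trans_le hle), Nat.testBit_lt_two_pow (j'.2.trans_le hle)]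

theorem tupleCode_eq_sum (d : N) (b : (Fin n → Bool) → N) :
    tupleCode d b = ∑ j : Fin (2 ^ n), b (binOfFin j) * d ^ (j : ℕ) := by
  rw [Fin.sum_univ_def, List.sum_eq_foldr, List.foldr_map]
  simp only [tupleCode, addM_eq, mulM_eq, powStd_eq, zeroM_eq]

theorem tupleCode_lt {d : N} {b : (Fin n → Bool) → N} (hb : ∀ σ, b σ < d) :
    tupleCode d b < d ^ 2 ^ n := by
  rw [tupleCode_eq_sum]
  exact sum_mul_pow_lt fun j => hb (binOfFin j)

/-- The tuple with code `e` in base `d`; a left inverse of `tupleCode d` on tuples below `d`. -/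
noncomputable def decode (d e : N) (σ : Fin n → Bool) : N :=
  e / d ^ ((Equiv.ofBijective _ (binOfFin_bijective n)).symm σ : ℕ) % d

theorem decode_tupleCode {d : N} {b : (Fin n → Bool) → N} (hb : ∀ σ, b σ < d) :
    decode d (tupleCode d b) = b := by
  funext σ
  obtain ⟨j, rfl⟩ := (Equiv.ofBijective _ (binOfFin_bijective n)).surjective σ
  rw [decode, Equiv.symm_apply_apply, tupleCode_eq_sum]
  exact sum_mul_pow_div_mod (fun j => hb (binOfFin j)) j

instance DefFun.decode {d : N} {f : (α → N) → N} [DefFun f] (σ : Fin n → Bool) :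
    DefFun fun v => decode d (f v) σ := by
  unfold Arith.decode
  infer_instance

theorem DefFun.sum {ι : Type*} (s : Finset ι) {f : ι → (α → N) → N} [∀ i, DefFun (f i)] :
    DefFun fun v => ∑ i ∈ s, f i v := by
  classical
  induction s using Finset.induction_on with
  | empty => simpa only [Finset.sum_empty] using DefFun.const (α := α) (0 : N)
  | insert i s hi ih =>
    simp only [Finset.sum_insert hi]
    infer_instance

instance DefFun.tupleCode {d : N} {f : (α → N) → (Fin n → Bool) → N}
    [∀ σ, DefFun fun v => f v σ] : DefFun fun v => tupleCode d (f v) := by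
  simp only [tupleCode_eq_sum]
  exact DefFun.sum _

/-- The set of codes in base `d` of the tuples satisfying `P`; the set `realizationCodes d fmls` is
the case `P = RealizesAll fmls`. -/
def codes (d : N) (P : ((Fin n → Bool) → N) → Prop) : Set N := {e | ∃ b, P b ∧ e = tupleCode d b}

instance DefSet.codes (d : N) (P : ((Fin n → Bool) → N) → Prop) [hP : DefPred P] :
    DefSet (codes d P) := by
  have := hP.reindex (Sum.inr (α := Unit))
  exact ⟨DefPred.exists_tuple (P := fun (v : Unit → N) b => P b ∧ v () = Arith.tupleCode d b)
    inferInstance⟩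

theorem codes_subset_Iio {d : N} {P : ((Fin n → Bool) → N) → Prop}
    (hPd : ∀ b, P b → ∀ σ, b σ < d) : codes d P ⊆ Set.Iio (d ^ 2 ^ n) := by
  rintro _ ⟨b, hb, rfl⟩
  exact tupleCode_lt (hPd b hb)

/-- The number, computed inside `N`, of tuples below `d` satisfying `P`. -/
noncomputable def card (d : N) (P : ((Fin n → Bool) → N) → Prop) : N :=
  count (codes d P) (d ^ 2 ^ n)

theorem internalCard_codes {d : N} {P : ((Fin n → Bool) → N) → Prop} [DefPred P]
    (hPd : ∀ b, P b → ∀ σ, b σ < d) : InternalCard (codes d P) (card d P) := by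
  have h := internalCard_count (codes d P) (d ^ 2 ^ n)
  rwa [Set.inter_eq_left.2 (codes_subset_Iio hPd)] at h

theorem card_le_add {d : N} {P Q R : ((Fin n → Bool) → N) → Prop} [DefPred P] [DefPred Q]
    [DefPred R] (h : ∀ b, P b → Q b ∨ R b) : card d P ≤ card d Q + card d R := by
  refine count_le_add ?_ _
  rintro _ ⟨b, hb, rfl⟩
  exact (h b hb).imp (fun hQ => ⟨b, hQ, rfl⟩) fun hR => ⟨b, hR, rfl⟩

/-- The tuple `b` with the residue modulo `m` of its coordinate `σ` replaced by `s`, for `s < m`. -/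
noncomputable def setResidue (m : N) (σ : Fin n → Bool) (b : (Fin n → Bool) → N) (s : N) :
    (Fin n → Bool) → N :=
  Function.update b σ (b σ / m * m + s)

theorem setResidue_self (m : N) (σ : Fin n → Bool) (b : (Fin n → Bool) → N) (s : N) :
    setResidue m σ b s σ = b σ / m * m + s :=
  Function.update_self ..

theorem setResidue_of_ne (m : N) {σ τ : Fin n → Bool} (hτ : τ ≠ σ) (b : (Fin n → Bool) → N)
    (s : N) : setResidue m σ b s τ = b τ :=
  Function.update_of_ne hτ ..

instance DefFun.setResidue {m : N} {σ : Fin n → Bool} {f : (α → N) → (Fin n → Bool) → N}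
    {g : (α → N) → N} [hf : ∀ τ, DefFun fun v => f v τ] [DefFun g] (τ : Fin n → Bool) :
    DefFun fun v => setResidue m σ (f v) (g v) τ := by
  rcases eq_or_ne τ σ with rfl | hτ
  · simp only [setResidue_self]
    infer_instance
  · simpa only [setResidue_of_ne m hτ] using hf τ

theorem setResidue_lt {d m : N} (hm : m ∣ d) {b : (Fin n → Bool) → N} (hb : ∀ τ, b τ < d) {s : N}
    (hs : s < m) (σ τ : Fin n → Bool) : setResidue m σ b s τ < d := by
  rcases eq_or_ne τ σ with rfl | hτ
  · obtain ⟨w, rfl⟩ := hm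
    rw [setResidue_self]
    exact mul_add_lt_mul hs (div_lt_of_lt_mul ((hb τ).trans_eq (mul_comm _ _)))
  · exact (setResidue_of_ne m hτ b s).trans_lt (hb τ)

theorem setResidue_eq_iff {m : N} {σ : Fin n → Bool} {b b' : (Fin n → Bool) → N} {s t : N}
    (hs : s < m) (ht : t < m) :
    setResidue m σ b s = setResidue m σ b' t ↔
      (∀ τ ≠ σ, b τ = b' τ) ∧ b σ / m = b' σ / m ∧ s = t := by
  constructor
  · intro h
    have hσ := congrFun h σ
    rw [setResidue_self, setResidue_self] at hσ
    refine ⟨fun τ hτ => ?_, ?_, ?_⟩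
    · rw [← setResidue_of_ne m hτ b s, h, setResidue_of_ne m hτ]
    · rw [← mul_add_div (q := b σ / m) hs, hσ, mul_add_div ht]
    · rw [← mul_add_mod (q := b σ / m) hs, hσ, mul_add_mod ht]
  · rintro ⟨hne, hdiv, rfl⟩
    funext τ
    rcases eq_or_ne τ σ with rfl | hτ
    · rw [setResidue_self, setResidue_self, hdiv]
    · rw [setResidue_of_ne m hτ, setResidue_of_ne m hτ, hne τ hτ]

-- `(b, s) ↦ setResidue m σ b s` maps the pairs with `P b` and `s < m` injectively to tuples below
-- `d`.
theorem card_mul_le {d m : N} (hm : m ∣ d) (σ : Fin n → Bool) {P : ((Fin n → Bool) → N) → Prop}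
    [DefPred P] (hPd : ∀ b, P b → ∀ τ, b τ < d)
    (hP : ∀ b b', P b → P b' → (∀ τ ≠ σ, b τ = b' τ) → b σ % m = b' σ % m) :
    card d P * m ≤ d ^ 2 ^ n := by
  have : DefFun₂ fun e s => tupleCode d (setResidue m σ (decode d e) s) :=
    ⟨DefFun.tupleCode (f := fun v => setResidue m σ (decode d (v 0)) (v 1))⟩
  refine (internalCard_codes hPd).mul_le
    (G := fun e s => tupleCode d (setResidue m σ (decode d e) s)) ?_ ?_
  · rintro _ ⟨b, hb, rfl⟩ s hs
    rw [decode_tupleCode (hPd b hb)]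
    exact tupleCode_lt (setResidue_lt hm (hPd b hb) hs σ)
  · rintro _ ⟨b, hb, rfl⟩ s hs _ ⟨b', hb', rfl⟩ t ht h
    rw [decode_tupleCode (hPd b hb), decode_tupleCode (hPd b' hb')] at h
    have hset : setResidue m σ b s = setResidue m σ b' t := by
      rw [← decode_tupleCode (setResidue_lt hm (hPd b hb) hs σ), h,
        decode_tupleCode (setResidue_lt hm (hPd b' hb') ht σ)]
    obtain ⟨hne, hdiv, hst⟩ := (setResidue_eq_iff hs ht).1 hset
    refine ⟨congrArg _ (funext fun τ => ?_), hst⟩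
    rcases eq_or_ne τ σ with rfl | hτ
    · rw [← div_mul_add_mod (b τ) m, ← div_mul_add_mod (b' τ) m, hdiv, hP b b' hb hb' hne]
    · exact hne τ hτ

end TupleCode

section Largeness

variable {N : Type*} [arith.Structure N] [PA N] {n : ℕ} {d : N}
  {P Q R : ((Fin n → Bool) → N) → Prop}

/-- The tuples satisfying `P` make up more than the fraction `1 / v` of all tuples below `d`, for
some standard `v`; this is the density requirement on a condition, where a positive rational `u / v`
can be replaced by `1 / v`. -/
def IsLarge (d : N) (P : ((Fin n → Bool) → N) → Prop) : Prop :=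
  ∃ v : ℕ, d ^ 2 ^ n < v * card d P

theorem IsLarge.exists_realization [DefPred P] (hP : IsLarge d P) : ∃ b, P b := by
  obtain ⟨v, hv⟩ := hP
  obtain ⟨_, -, ⟨b, hb, -⟩, -⟩ :=
    exists_count_eq (pos_of_mul_pos_right (zero_le.trans_lt hv) zero_le)
  exact ⟨b, hb⟩

theorem lt_two_mul_mul_card_or [DefPred P] [DefPred Q] [DefPred R] {v : ℕ}
    (hv : d ^ 2 ^ n < v * card d P) (h : ∀ b, P b → Q b ∨ R b) :
    d ^ 2 ^ n < (2 * v : ℕ) * card d Q ∨ d ^ 2 ^ n < (2 * v : ℕ) * card d R := by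
  by_contra! hle
  refine (lt_self_iff_false (2 * d ^ 2 ^ n)).1 ?_
  calc 2 * d ^ 2 ^ n < 2 * (v * card d P) := by gcongr
    _ ≤ 2 * (v * (card d Q + card d R)) := by gcongr; exact card_le_add h
    _ = (2 * v : ℕ) * card d Q + (2 * v : ℕ) * card d R := by push_cast; ring
    _ ≤ d ^ 2 ^ n + d ^ 2 ^ n := add_le_add hle.1 hle.2
    _ = 2 * d ^ 2 ^ n := (two_mul _).symm

theorem IsLarge.or [DefPred P] [DefPred Q] [DefPred R] (hP : IsLarge d P)
    (h : ∀ b, P b → Q b ∨ R b) : IsLarge d Q ∨ IsLarge d R := by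
  obtain ⟨v, hv⟩ := hP
  exact (lt_two_mul_mul_card_or hv h).imp (.intro _) (.intro _)

theorem IsLarge.exists_of_finite {ι : Type*} [Finite ι] {Q : ι → ((Fin n → Bool) → N) → Prop}
    [DefPred P] [∀ i, DefPred (Q i)] (hP : IsLarge d P) (h : ∀ b, P b → ∃ i, Q i b) :
    ∃ i, IsLarge d (Q i) := by
  classical
  have := Fintype.ofFinite ι
  suffices H : ∀ s : Finset ι, (∀ b, P b → ∃ i ∈ s, Q i b) → ∃ i, IsLarge d (Q i) from
    H Finset.univ fun b hb => (h b hb).imp fun i hi => ⟨Finset.mem_univ i, hi⟩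
  clear h
  intro s hs
  induction s using Finset.induction_on generalizing P with
  | empty =>
    obtain ⟨b, hb⟩ := hP.exists_realization
    obtain ⟨i, hi, -⟩ := hs b hb
    exact absurd hi (Finset.notMem_empty i)
  | insert i s _ ih =>
    have hor : IsLarge d (Q i) ∨ IsLarge d fun b => P b ∧ ¬ Q i b :=
      hP.or fun b hb => or_iff_not_imp_left.2 fun hQ => ⟨hb, hQ⟩
    refine hor.elim (fun hi => ⟨i, hi⟩) fun hrest => ih (P := fun b => P b ∧ ¬ Q i b) hrest ?_
    rintro b ⟨hb, hQ⟩
    obtain ⟨j, hj, hQj⟩ := hs b hb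
    exact ⟨j, Finset.mem_of_mem_insert_of_ne hj fun hij => hQ (hij ▸ hQj), hQj⟩

theorem IsLarge.exists_digit_ne (hd : ∀ m : ℕ, 2 ^ m ∣ d) [DefPred P]
    (hPd : ∀ b, P b → ∀ τ, b τ < d) (hP : IsLarge d P) {σ : Fin n → Bool}
    {f : ((Fin n → Bool) → N) → N} [DefFun f]
    (hf : ∀ b b', (∀ τ ≠ σ, b τ = b' τ) → f b = f b') :
    ∃ i : ℕ, IsLarge d fun b => P b ∧ ¬ (digitB (b σ) i ↔ digitB (f b) i) := by
  obtain ⟨v, hv⟩ := hP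
  let Agree (b : (Fin n → Bool) → N) := ∀ i : Fin (2 * v), digitB (b σ) i ↔ digitB (f b) i
  have : DefPred Agree := DefPred.finite_forall
  have card_agree : (2 * v : ℕ) * card d (fun b => P b ∧ Agree b) ≤ d ^ 2 ^ n :=
    calc (2 * v : ℕ) * card d (fun b => P b ∧ Agree b)
        ≤ 2 ^ (2 * v) * card d (fun b => P b ∧ Agree b) := by
          gcongr
          exact_mod_cast Nat.lt_two_pow_self.le
      _ = card d (fun b => P b ∧ Agree b) * 2 ^ (2 * v) := mul_comm _ _
      _ ≤ d ^ 2 ^ n := by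
          refine card_mul_le (hd (2 * v)) σ (fun b hb => hPd b hb.1) ?_
          rintro b b' ⟨-, hb⟩ ⟨-, hb'⟩ hne
          exact mod_two_pow_eq_of_digitB_iff fun i hi => by
            rw [hb ⟨i, hi⟩, hb' ⟨i, hi⟩, hf b b' hne]
  have hdisagree : IsLarge d fun b => P b ∧ ¬ Agree b :=
    ⟨2 * v, (lt_two_mul_mul_card_or hv fun b hb =>
      (em (Agree b)).imp (.intro hb) (.intro hb)).resolve_left card_agree.not_gt⟩
  obtain ⟨i, hi⟩ := hdisagree.exists_of_finite
    (Q := fun (i : Fin (2 * v)) b => P b ∧ ¬ (digitB (b σ) i ↔ digitB (f b) i))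
    fun b hb => (not_forall.1 hb.2).imp fun _ => .intro hb.1
  exact ⟨i, hi⟩

theorem IsLarge.exists_forall {ι κ : Type*} [Finite ι]
    {Q : ι → κ → ((Fin n → Bool) → N) → Prop} [∀ t i, DefPred (Q t i)] [hPdef : DefPred P]
    (hP : IsLarge d P)
    (hQ : ∀ t R, DefPred R → (∀ b, R b → P b) → IsLarge d R →
      ∃ i, IsLarge d fun b => R b ∧ Q t i b) :
    ∃ R, DefPred R ∧ (∀ b, R b → P b) ∧ IsLarge d R ∧ ∀ t, ∃ i, ∀ b, R b → Q t i b := by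
  classical
  have := Fintype.ofFinite ι
  suffices H : ∀ s : Finset ι, ∃ R, DefPred R ∧ (∀ b, R b → P b) ∧ IsLarge d R ∧
      ∀ t ∈ s, ∃ i, ∀ b, R b → Q t i b by
    simpa only [Finset.mem_univ, true_implies] using H Finset.univ
  intro s
  induction s using Finset.induction_on with
  | empty => exact ⟨P, hPdef, fun _ => id, hP, fun t ht => absurd ht (Finset.notMem_empty t)⟩
  | insert t s _ ih =>
    obtain ⟨R, hRdef, hRP, hR, hs⟩ := ih
    obtain ⟨i, hi⟩ := hQ t R hRdef hRP hR
    refine ⟨fun b => R b ∧ Q t i b, inferInstance, fun b hb => hRP b hb.1, hi, ?_⟩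
    refine Finset.forall_mem_insert _ _ _ |>.2 ⟨⟨i, fun b hb => hb.2⟩, fun t' ht' => ?_⟩
    obtain ⟨j, hj⟩ := hs t' ht'
    exact ⟨j, fun b hb => hj b hb.1⟩

end Largeness

section Conditions

variable {N : Type*} [arith.Structure N] {n : ℕ} {d : N}

theorem realizesAll_insert {φ : CFormula N n} {fmls : Set (CFormula N n)}
    {b : (Fin n → Bool) → N} :
    RealizesAll (insert φ fmls) b ↔ φ.Realize b ∧ RealizesAll fmls b :=
  Set.forall_mem_insert

theorem reduct_refl (φ : CFormula N n) : reduct le_rfl φ = φ := by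
  have h := BoundedFormula.relabel_sumInl φ
  rwa [BoundedFormula.castLE_rfl] at h

variable [PA N]

theorem Condition.isLarge (p : Condition N d) : IsLarge d (RealizesAll p.fmls) := by
  have := defPred_realizesAll p.finite
  obtain ⟨u, v, c, hu, -, hc, hlt⟩ := p.large
  refine ⟨v, ?_⟩
  calc d ^ 2 ^ p.n ≤ u * d ^ 2 ^ p.n := le_mul_of_one_le_left zero_le (by exact_mod_cast hu)
    _ < v * c := hlt
    _ ≤ v * card d (RealizesAll p.fmls) := by
      gcongr
      exact hc.le_count (D := codes d (RealizesAll p.fmls)) (codes_subset_Iio p.bounded)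

/-- The condition obtained from `p` by adding the formula `φ`, which keeps the variables of `p`. -/
def Condition.insert (p : Condition N d) (φ : CFormula N p.n)
    (h : IsLarge d (RealizesAll (Insert.insert φ p.fmls))) : Condition N d where
  n := p.n
  fmls := Insert.insert φ p.fmls
  finite := p.finite.insert φ
  realizable :=
    have := defPred_realizesAll (p.finite.insert φ)
    h.exists_realization
  bounded b hb := p.bounded b (realizesAll_insert.1 hb).2
  large := by
    have := defPred_realizesAll (p.finite.insert φ)
    obtain ⟨v, hv⟩ := h
    refine ⟨1, v, card d (RealizesAll (Insert.insert φ p.fmls)), one_pos, ?_,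
      internalCard_codes fun b hb => p.bounded b (realizesAll_insert.1 hb).2, ?_⟩
    · rw [pos_iff_ne_zero]
      rintro rfl
      simp at hv
    · simpa only [ltM_iff, mulM_eq, numeral_eq, powStd_eq, Nat.cast_one, one_mul] using hv

theorem Condition.insert_le (p : Condition N d) {φ : CFormula N p.n}
    (h : IsLarge d (RealizesAll (Insert.insert φ p.fmls))) : CondLE (p.insert φ h) p :=
  ⟨le_rfl, fun ψ hψ => .inr (reduct_refl ψ ▸ hψ)⟩

end Conditions

end Arith

open Arith in
theorem statement_9_general {N : Type*} [arith.Structure N] [PA N] {d : N}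
    (hd : ∀ m : ℕ, 2 ^ m ∣ d) (p : Condition N d) {k : ℕ} {F : (Fin k → N) → N}
    (hF : DefinableFun F) :
    ∃ q : Condition N d, CondLE q p ∧ q.n = p.n ∧
      ∀ (σ : Fin q.n → Bool) (σs : Fin k → Fin q.n → Bool), (∀ j, σ ≠ σs j) →
        ∃ i : ℕ, ∀ b : (Fin q.n → Bool) → N, RealizesAll q.fmls b →
          ¬ (digitB (b σ) i ↔ digitB (F fun j => b (σs j)) i) := by
  have (σs : Fin k → Fin p.n → Bool) : DefFun fun b : (Fin p.n → Bool) → N => F fun j => b (σs j) :=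
    hF.defFun.subst fun _ => inferInstance
  have := defPred_realizesAll p.finite
  obtain ⟨R, hRdef, hRp, hR, hRne⟩ := p.isLarge.exists_forall
    (ι := {t : (Fin p.n → Bool) × (Fin k → Fin p.n → Bool) // ∀ j, t.1 ≠ t.2 j})
    (Q := fun t i b => ¬ (digitB (b t.1.1) i ↔ digitB (F fun j => b (t.1.2 j)) i))
    fun t R _ hRp hR => hR.exists_digit_ne hd (fun b hb => p.bounded b (hRp b hb))
      fun b b' h => congrArg F (funext fun j => h _ (t.2 j).symm)
  obtain ⟨φ, hφ⟩ := exists_cformula hRdef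
  have hRφ : RealizesAll (insert φ p.fmls) = R := by
    funext b
    rw [realizesAll_insert, hφ, and_iff_left_of_imp (hRp b)]
  refine ⟨p.insert φ (hRφ ▸ hR), p.insert_le _, rfl, fun σ σs hσ => ?_⟩
  obtain ⟨i, hi⟩ := hRne ⟨(σ, σs), hσ⟩
  exact ⟨i, fun b hb => hi b (hRφ ▸ hb)⟩

open Arith in
/-- For every condition `p` and every `N`-definable `F : N^k → N` there is a condition
`q ≤ p` with `n_q = n_p` such that for every tuple `(σ, σ₁, …, σ_k)` from `2^{n_q}` with
`σ ∉ {σ₁, …, σ_k}` there is an `i < ω` with `q ⊢ (x_σ)_i ≠ (F(x_{σ₁}, …, x_{σ_k}))_i`. -/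
theorem statement_9 (N : Type*) [arith.Structure N] (hN : NonstandardModel N)
    (hNc : Countable N) (a d : N) (ha : ¬ IsStd a) (hd : IsPow2 a d)
    (p : Condition N d) (k : ℕ) (F : (Fin k → N) → N) (hF : DefinableFun F) :
    ∃ q : Condition N d, CondLE q p ∧ q.n = p.n ∧
      ∀ (σ : Fin q.n → Bool) (σs : Fin k → Fin q.n → Bool), (∀ j, σ ≠ σs j) →
        ∃ i : ℕ, ∀ b : (Fin q.n → Bool) → N, RealizesAll q.fmls b →
          ¬ (digitB (b σ) i ↔ digitB (F fun j => b (σs j)) i) := by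
  have : PA N := ⟨hN.1⟩
  exact statement_9_general (fun m => hd.two_pow_dvd ha m) p hF
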